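/- Let R be a ring and X a bounded chain complex of finitely generated projective R-modules such that H_i(X) = 0 for all i < 0 and such that the dual complex Hom_R(X, R) (a complex of right R-modules) satisfies H_i(Hom_R(X,R)) = 0 for all i > 0 (equivalently, the hyper-Ext groups Ext^i_R(X, R) vanish for i > 0). Then X is quasi-isomorphic to a finitely generated projective R-module P placed in degree 0. -/

import Mathlib

/-!
Write `d` for the differential of `X`. The point is that every `d : X_{j+1} → X_j` is split, i.e.
there is `h : X_j → X_{j+1}` with `d h d = d`.

* For targets of degree `< 0` this is proved by upward induction: if `d : X_n → X_{n-1}` is split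
  by `h`, then `1 - h d` has values in `ker d = im d`, hence lifts along `d : X_{n+1} → X_n`
  because `X_n` is projective, and any lift is a splitting (`exists_splitting_neg`).
* For targets of degree `≥ 0` the argument is dual, by downward induction: the vanishing of
  `Ext^j(X, R)` implies that of `Ext^j(X, M)` for every finitely generated projective `M`
  (`exists_factor`), so that `1 - d h` factors through the next differential
  (`exists_splitting_pos`).

Given splittings `h` in all degrees, put `p = d h` and `q = h d` on `X_j`. These are idempotents
with `q p = 0`, hence `e = (1 - p)(1 - q)` is an idempotent with `e d = 0` and `d e = 0`.
The homotopy `(1 - p) h` satisfies `d (1 - p) h + (1 - p) h d = p + (1 - p) q = 1 - e`, so `e` is an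
endomorphism of `X` homotopic to the identity. It vanishes in degrees `j < 0` by exactness and in
degrees `j > 0` by coexactness. Therefore `X` is homotopy equivalent to the image `P` of `e` in
degree `0`, which is a direct summand of `X_0`.
-/

open CategoryTheory Limits

universe u

/-- If every cocycle `A → R` on `d' : B → A` is a coboundary along `d : A → C`, then the same holds
with `R` replaced by a finitely generated projective module `M`: such an `M` is a retract of `R^n`,
where coboundaries can be found componentwise. -/
lemma exists_factor {R : Type u} [Ring R] {A B C M : ModuleCat.{u} R}
    (d' : B ⟶ A) (d : A ⟶ C) [Module.Finite R M] [Module.Projective R M]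
    (H : ∀ φ : A ⟶ ModuleCat.of R R, d' ≫ φ = 0 → ∃ ψ : C ⟶ ModuleCat.of R R, d ≫ ψ = φ)
    (φ : A ⟶ M) (hφ : d' ≫ φ = 0) : ∃ ψ : C ⟶ M, d ≫ ψ = φ := by
  obtain ⟨n, r, s, -, -, hrs⟩ := Module.Finite.exists_comp_eq_id_of_projective R M
  have key : ∀ c : Fin n, ∃ ψ : C ⟶ ModuleCat.of R R,
      d ≫ ψ = φ ≫ ModuleCat.ofHom (LinearMap.proj c ∘ₗ s) := fun c =>
    H _ (by rw [← Category.assoc, hφ, zero_comp])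
  choose ψ hψ using key
  refine ⟨ModuleCat.ofHom (r ∘ₗ LinearMap.pi fun c => (ψ c).hom), ?_⟩
  ext x
  have h1 : (fun c => (ψ c).hom (d.hom x)) = s (φ.hom x) := by
    funext c
    exact congrArg (fun f => f.hom x) (hψ c)
  have h2 : r (s (φ.hom x)) = φ.hom x := LinearMap.congr_fun hrs (φ.hom x)
  rw [← h2, ← h1]
  rfl

section

variable {R : Type u} [Ring R] (X : ChainComplex (ModuleCat.{u} R) ℤ)

/-- Exactness at `X_j` for `j < 0`, in the form of a lifting property of the projective `X_j`:
endomorphisms with values in the cycles lift along the incoming differential. -/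
lemma exists_lift_neg (hproj : ∀ j : ℤ, Module.Projective R (X.X j))
    (hconn : ∀ i : ℤ, i < 0 → IsZero (X.homology i)) (i j k : ℤ) (hij : j + 1 = i)
    (hjk : k + 1 = j) (hj : j < 0) (f : X.X j ⟶ X.X j) (hf : f ≫ X.d j k = 0) :
    ∃ g : X.X j ⟶ X.X i, g ≫ X.d i j = f := by
  have hex : (X.sc' i j k).Exact := (X.exactAt_iff' i j k
    ((ComplexShape.down ℤ).prev_eq' hij) ((ComplexShape.down ℤ).next_eq' hjk)).1
    ((X.exactAt_iff_isZero_homology j).2 (hconn j hj))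
  have : Module.Projective R (X.X j) := hproj j
  exact ⟨hex.liftFromProjective f hf, hex.liftFromProjective_comp f hf⟩

/-- Differentials with target of degree `j < 0` are split. The induction parameter `m` bounds the
distance of `j` from the lower end `a` of the complex. -/
lemma exists_splitting_neg (a : ℤ) (ha : ∀ j < a, IsZero (X.X j))
    (hproj : ∀ j : ℤ, Module.Projective R (X.X j))
    (hconn : ∀ i : ℤ, i < 0 → IsZero (X.homology i)) (m : ℕ) :
    ∀ i j : ℤ, j + 1 = i → j < 0 → j < a + m →
      ∃ h : X.X j ⟶ X.X i, X.d i j ≫ h ≫ X.d i j = X.d i j := by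
  induction m with
  | zero =>
    intro i j _ _ hja
    exact ⟨0, (ha j (by simpa using hja)).eq_of_tgt _ _⟩
  | succ m ih =>
    intro i j hij hj hja
    obtain ⟨h, hh⟩ := ih j (j - 1) (by lia) (by lia) (by push_cast at hja; lia)
    obtain ⟨g, hg⟩ := exists_lift_neg X hproj hconn i j (j - 1) hij (by lia) hj
      (𝟙 _ - X.d j (j - 1) ≫ h) (by simp [hh])
    exact ⟨g, by simp [hg]⟩

/-- Differentials with target of degree `j ≥ 0` are split. The hypothesis `hfac` is the extension
property dual to `exists_lift_neg`; the induction parameter `m` bounds the distance of the source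
from the upper end `b` of the complex. -/
lemma exists_splitting_pos (b : ℤ) (hb : ∀ j, b < j → IsZero (X.X j))
    (hfac : ∀ i j k : ℤ, j + 1 = i → k + 1 = j → 0 < j → ∀ f : X.X j ⟶ X.X j,
      X.d i j ≫ f = 0 → ∃ g : X.X k ⟶ X.X j, X.d j k ≫ g = f) (m : ℕ) :
    ∀ i j : ℤ, j + 1 = i → 0 ≤ j → b < i + m →
      ∃ h : X.X j ⟶ X.X i, X.d i j ≫ h ≫ X.d i j = X.d i j := by
  induction m with
  | zero =>
    intro i j _ _ hib
    exact ⟨0, (hb i (by simpa using hib)).eq_of_src _ _⟩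
  | succ m ih =>
    intro i j hij hj hib
    obtain ⟨h, hh⟩ := ih (i + 1) i rfl (by lia) (by push_cast at hib; lia)
    obtain ⟨g, hg⟩ := hfac (i + 1) i j rfl hij (by lia)
      (𝟙 _ - h ≫ X.d (i + 1) i) (by simp [hh])
    refine ⟨g, ?_⟩
    rw [← Category.assoc, hg]
    simp

end

theorem stmt9 {R : Type u} [Ring R] (X : ChainComplex (ModuleCat.{u} R) ℤ)
    (hbdd : ∃ a b : ℤ, ∀ j : ℤ, (j < a ∨ b < j) → IsZero (X.X j))
    (hfg : ∀ j : ℤ, Module.Finite R (X.X j))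
    (hproj : ∀ j : ℤ, Module.Projective R (X.X j))
    (hconn : ∀ i : ℤ, i < 0 → IsZero (X.homology i))
    (hcoconn : ∀ j : ℤ, 0 < j → ∀ φ : X.X j ⟶ ModuleCat.of R R,
      X.d (j + 1) j ≫ φ = 0 → ∃ ψ : X.X (j - 1) ⟶ ModuleCat.of R R,
        X.d j (j - 1) ≫ ψ = φ) :
    ∃ P : ModuleCat.{u} R, Module.Finite R P ∧ Module.Projective R P ∧
      ∃ f : X ⟶ (HomologicalComplex.single (ModuleCat.{u} R) (ComplexShape.down ℤ) 0).obj P,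
        QuasiIso f := by
  obtain ⟨a, b, hab⟩ := hbdd
  have hfac : ∀ i j k : ℤ, j + 1 = i → k + 1 = j → 0 < j → ∀ f : X.X j ⟶ X.X j,
      X.d i j ≫ f = 0 → ∃ g : X.X k ⟶ X.X j, X.d j k ≫ g = f := by
    intro i j k hij hjk hj f hf
    obtain rfl : k = j - 1 := by lia
    subst hij
    have := hfg j
    have := hproj j
    exact exists_factor _ _ (hcoconn j hj) f hf
  have hsplit : ∀ j i : ℤ, (ComplexShape.down ℤ).Rel i j →
      ∃ h : X.X j ⟶ X.X i, X.d i j ≫ h ≫ X.d i j = X.d i j := by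
    intro j i (hij : j + 1 = i)
    rcases lt_or_ge j 0 with hj | hj
    · exact exists_splitting_neg X a (fun j hj => hab j (.inl hj)) hproj hconn
        (j + 1 - a).toNat i j hij hj (by lia)
    · exact exists_splitting_pos X b (fun j hj => hab j (.inr hj)) hfac
        (b + 1 - i).toNat i j hij hj (by lia)
  choose h hh using hsplit
  have rel : ∀ j : ℤ, (ComplexShape.down ℤ).Rel (j + 1) j := fun j => rfl
  have rel' : ∀ j : ℤ, (ComplexShape.down ℤ).Rel j (j - 1) := fun j => sub_add_cancel j 1
  -- the homotopy `(1 - p) h`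
  let s : ∀ i j : ℤ, (ComplexShape.down ℤ).Rel j i → (X.X i ⟶ X.X j) := fun i j r =>
    h i j r ≫ (𝟙 _ - h j (j + 1) (rel j) ≫ X.d (j + 1) j)
  -- composition is written in diagrammatic order, so `e.f j` is the map `(1 - p)(1 - q)`
  let e : X ⟶ X := 𝟙 X - Homotopy.nullHomotopicMap' s
  have he : ∀ j : ℤ, e.f j = (𝟙 _ - X.d j (j - 1) ≫ h (j - 1) j (rel' j)) ≫
      (𝟙 _ - h j (j + 1) (rel j) ≫ X.d (j + 1) j) := by
    intro j
    simp only [e, HomologicalComplex.sub_f_apply, HomologicalComplex.id_f,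
      Homotopy.nullHomotopicMap'_f (rel j) (rel' j), s]
    simp only [Preadditive.sub_comp, Preadditive.comp_sub, Category.assoc, Category.id_comp,
      Category.comp_id, X.d_comp_d, comp_zero, sub_zero]
    abel
  have hde : ∀ j : ℤ, X.d (j + 1) j ≫ e.f j = 0 := by
    intro j
    rw [he]
    simp [hh]
  have hed : ∀ j : ℤ, e.f j ≫ X.d j (j - 1) = 0 := by
    intro j
    rw [he]
    simp [hh]
  have hee : e.f 0 ≫ e.f 0 = e.f 0 := by
    have h1 : (𝟙 _ - h 0 (0 + 1) (rel 0) ≫ X.d (0 + 1) 0) ≫ e.f 0 = e.f 0 := by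
      rw [Preadditive.sub_comp, Category.assoc, hde 0, comp_zero, sub_zero, Category.id_comp]
    have h2 : (𝟙 _ - X.d 0 (0 - 1) ≫ h (0 - 1) 0 (rel' 0)) ≫ e.f 0 = e.f 0 := by
      rw [he]
      simp only [Preadditive.sub_comp, Preadditive.comp_sub, Category.assoc, Category.id_comp,
        Category.comp_id, reassoc_of% hh]
      abel
    nth_rewrite 1 [he 0]
    rw [Category.assoc, h1, h2]
  have hne : ∀ j : ℤ, j ≠ 0 → e.f j = 0 := by
    intro j hj
    rcases lt_or_gt_of_ne hj with hj | hj
    · obtain ⟨g, hg⟩ := exists_lift_neg X hproj hconn (j + 1) j (j - 1) rfl (by lia) hj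
        (𝟙 _ - X.d j (j - 1) ≫ h (j - 1) j (rel' j)) (by simp [hh])
      rw [he, ← hg]
      simp [hh]
    · obtain ⟨g, hg⟩ := hfac (j + 1) j (j - 1) rfl (by lia) hj
        (𝟙 _ - h j (j + 1) (rel j) ≫ X.d (j + 1) j) (by simp [hh])
      rw [he, ← hg]
      simp [reassoc_of% hh]
  obtain ⟨P, ι, π, hιπ, hπι⟩ := IsIdempotentComplete.idempotents_split (X.X 0) (e.f 0) hee
  have hsurj : π.hom ∘ₗ ι.hom = LinearMap.id := by
    rw [← ModuleCat.hom_comp, hιπ]; rfl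
  have := hfg 0
  have := hproj 0
  refine ⟨P, Module.Finite.of_surjective π.hom fun x => ⟨ι.hom x, LinearMap.congr_fun hsurj x⟩,
    Module.Projective.of_split ι.hom π.hom hsurj, ?_⟩
  let f : X ⟶ (HomologicalComplex.single (ModuleCat.{u} R) (ComplexShape.down ℤ) 0).obj P :=
    HomologicalComplex.mkHomToSingle π (by
      rintro i (rfl : (0 : ℤ) + 1 = i)
      rw [← Category.comp_id π, ← hιπ, reassoc_of% hπι, reassoc_of% (hde 0), zero_comp])
  let g : (HomologicalComplex.single (ModuleCat.{u} R) (ComplexShape.down ℤ) 0).obj P ⟶ X :=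
    HomologicalComplex.mkHomFromSingle ι (by
      rintro k (hk : k + 1 = 0)
      obtain rfl : k = 0 - 1 := by lia
      rw [← Category.id_comp ι, ← hιπ, Category.assoc, Category.assoc, reassoc_of% hπι,
        hed 0, comp_zero])
  have hfg' : f ≫ g = e := by
    ext1 j
    by_cases hj : j = 0
    · subst hj
      simp [f, g, hπι]
    · rw [hne j hj]
      rw [HomologicalComplex.comp_f,
        (HomologicalComplex.isZero_single_obj_X _ _ _ _ hj).eq_zero_of_tgt (f.f j), zero_comp]
  have hgf : g ≫ f = 𝟙 _ := by
    apply HomologicalComplex.from_single_hom_ext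
    simp [f, g, reassoc_of% hιπ]
  let E : HomotopyEquiv X
      ((HomologicalComplex.single (ModuleCat.{u} R) (ComplexShape.down ℤ) 0).obj P) :=
    { hom := f
      inv := g
      homotopyHomInvId := (Homotopy.ofEq hfg').trans
        (Homotopy.equivSubZero.symm
          ((Homotopy.ofEq (sub_sub_cancel _ _)).trans (Homotopy.nullHomotopy' s))).symm
      homotopyInvHomId := Homotopy.ofEq hgf }
  exact ⟨f, E.quasiIso_hom⟩
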